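/- Let (I, ≤) be a directed preordered set. For each i ∈ I let A_i be a unital C*-algebra equipped with a grading automorphism α_i (a *-algebra automorphism with α_i ∘ α_i = id), and for i ≤ j let φ_{ij} : A_i → A_j be unital *-homomorphisms satisfying φ_{ii} = id, φ_{jk} ∘ φ_{ij} = φ_{ik} for i ≤ j ≤ k, and φ_{ij} ∘ α_i = α_j ∘ φ_{ij}. Let B be a unital C*-algebra with grading automorphism β, together with unital *-homomorphisms φ_i : A_i → B satisfying φ_j ∘ φ_{ij} = φ_i for i ≤ j and φ_i ∘ α_i = β ∘ φ_i, such that the union of the images φ_i(A_i) is dense in B and ‖φ_i(a)‖ = inf{‖φ_{ij}(a)‖ : j ≥ i} for every i ∈ I and a ∈ A_i. If x ∈ B satisfies x* = x, x² = 1 and β(x) = −x, then for every ε > 0 there exist j ∈ I and y ∈ A_j with y* = y, y² = 1, α_j(y) = −y, and ‖φ_j(y) − x‖ < ε. -/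

import Mathlib

/-!
Averaging over the adjoint and the grading gives a continuous projection `oddSelfAdjointPart` onto
the odd self-adjoint elements, which fixes `x` and commutes with the maps `φ i`. By density some
`φ i b`, with `b` odd and self-adjoint, is close to `x` and satisfies `‖φ i b ^ 2 - 1‖ < η < 1`; by
the norm formula the image `c` of `b` in some `A j` satisfies `‖c ^ 2 - 1‖ < η`. The spectrum of `c`
then avoids `0`, so the sign function may be applied to `c` (`exists_supersymmetry_near`). Since
sign is odd, squares to `1`, and `|sign t - t| ≤ |t ^ 2 - 1|`, the result is a supersymmetry within
`η` of `c`.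
-/

/-- The degree-1 self-adjoint part of an element with respect to the grading automorphism `β`. -/
noncomputable def oddSelfAdjointPart {B : Type*} [CStarAlgebra B] (β : B ≃⋆ₐ[ℂ] B) (b : B) : B :=
  (4 : ℂ)⁻¹ • (b + star b - β b - star (β b))

theorem continuous_oddSelfAdjointPart {B : Type*} [CStarAlgebra B] (β : B ≃⋆ₐ[ℂ] B) :
    Continuous (oddSelfAdjointPart β) := by
  have hβ : Continuous β := (StarAlgEquiv.isometry β).continuous
  unfold oddSelfAdjointPart
  fun_prop

theorem star_oddSelfAdjointPart {B : Type*} [CStarAlgebra B] (β : B ≃⋆ₐ[ℂ] B) (b : B) :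
    star (oddSelfAdjointPart β b) = oddSelfAdjointPart β b := by
  have h4 : star (4 : ℂ)⁻¹ = (4 : ℂ)⁻¹ := by simp
  unfold oddSelfAdjointPart
  rw [star_smul, h4]
  congr 1
  simp only [star_sub, star_add, star_star]
  abel

theorem map_oddSelfAdjointPart {B : Type*} [CStarAlgebra B] (β : B ≃⋆ₐ[ℂ] B)
    (hβ : ∀ b : B, β (β b) = b) (b : B) :
    β (oddSelfAdjointPart β b) = -oddSelfAdjointPart β b := by
  unfold oddSelfAdjointPart
  rw [map_smul, ← smul_neg]
  congr 1
  simp only [map_sub, map_add, map_star, hβ]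
  abel

theorem oddSelfAdjointPart_eq_self {B : Type*} [CStarAlgebra B] (β : B ≃⋆ₐ[ℂ] B) (x : B)
    (hxsa : star x = x) (hxdeg : β x = -x) : oddSelfAdjointPart β x = x := by
  unfold oddSelfAdjointPart
  rw [hxdeg, star_neg, hxsa]
  module

/-- An odd self-adjoint element whose square is close to `1` is close to a supersymmetry, namely
its image under the sign function `t ↦ t / |t|`. -/
theorem exists_supersymmetry_near {A : Type*} [CStarAlgebra A] (α : A ≃⋆ₐ[ℂ] A) (c : A)
    (hsa : star c = c) (hodd : α c = -c) {η : ℝ} (hη : η < 1) (hc : ‖c ^ 2 - 1‖ < η) :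
    ∃ y : A, star y = y ∧ y ^ 2 = 1 ∧ α y = -y ∧ ‖y - c‖ ≤ η := by
  have hcs : IsSelfAdjoint c := hsa
  have hη0 : 0 ≤ η := (norm_nonneg _).trans hc.le
  have hcfc : cfc (fun t : ℝ => t ^ 2 - 1) c = c ^ 2 - 1 := by
    rw [cfc_sub (fun t : ℝ => t ^ 2) (fun _ => 1) c, cfc_pow_id c 2, cfc_const_one ℝ c]
  have hspec : ∀ t ∈ spectrum ℝ c, |t ^ 2 - 1| < η := fun t ht => by
    have := norm_apply_le_norm_cfc (fun t : ℝ => t ^ 2 - 1) c ht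
    rw [hcfc] at this
    exact this.trans_lt hc
  have hne : ∀ t ∈ spectrum ℝ c, t ≠ 0 := by
    rintro t ht rfl
    have := hspec 0 ht
    norm_num at this
    linarith
  set f : ℝ → ℝ := fun t => t / |t| with hf
  have hfc : ContinuousOn f (spectrum ℝ c) :=
    continuousOn_id.div continuous_abs.continuousOn fun t ht => abs_ne_zero.2 (hne t ht)
  refine ⟨cfc f c, (cfc_predicate f c : IsSelfAdjoint _), ?_, ?_, ?_⟩
  · rw [← cfc_pow f 2 c, ← cfc_one ℝ c]
    refine cfc_congr fun t ht => ?_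
    have := hne t ht
    simp [hf, div_pow, this]
  · have hα : Continuous α := (StarAlgEquiv.isometry α).continuous
    have hmap : α (cfc f c) = cfc f (α c) :=
      StarAlgHomClass.map_cfc (S := ℂ) α f c hfc hα hcs (by rw [hodd]; exact hcs.neg)
    have hfc_neg : ContinuousOn f (Set.image (fun t : ℝ => -t) (spectrum ℝ c)) := by
      refine continuousOn_id.div continuous_abs.continuousOn ?_
      rintro _ ⟨t, ht, rfl⟩
      simpa using hne t ht
    rw [hmap, hodd, ← cfc_comp_neg f c hfc_neg, ← cfc_neg f c]
    refine cfc_congr fun t _ => ?_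
    simp [hf, neg_div]
  · have hsub : cfc f c - c = cfc (fun t => f t - t) c := by
      rw [cfc_sub f (fun t => t) c, cfc_id' ℝ c]
    rw [hsub]
    refine norm_cfc_le hη0 fun t ht => ?_
    have h1 := hspec t ht
    have h0 := hne t ht
    refine le_trans ?_ h1.le
    -- `t ^ 2 - 1 = (t - sign t) * (t + sign t)`, and the second factor has modulus at least `1`
    rw [Real.norm_eq_abs]
    rcases lt_or_gt_of_ne h0 with h | h
    · have : f t = -1 := by simp only [hf, abs_of_neg h]; field_simp
      rw [this, show t ^ 2 - 1 = (-1 - t) * (1 - t) by ring, abs_mul]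
      exact le_mul_of_one_le_right (abs_nonneg _) (by rw [abs_of_pos] <;> linarith)
    · have : f t = 1 := by simp only [hf, abs_of_pos h]; field_simp
      rw [this, show t ^ 2 - 1 = (1 - t) * (-(1 + t)) by ring, abs_mul, abs_neg]
      exact le_mul_of_one_le_right (abs_nonneg _) (by rw [abs_of_pos] <;> linarith)

/-- Approximate lifting of supersymmetries through a direct limit of graded unital C*-algebras.
The family `(A i, φij)` is a directed system of graded unital C*-algebras (gradings given by the
involutive automorphisms `α i`), and `B` (with grading `β` and compatible maps `φ i : A i → B`,
dense union of images and the direct-limit norm formula) is its direct limit.  Every degree-1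
self-adjoint square root of `1` in `B` is within `ε` of the image of such an element of some
`A j`. -/
theorem stmt_0 {I : Type*} [Preorder I] [IsDirected I (· ≤ ·)]
    (A : I → Type*) [∀ i, CStarAlgebra (A i)]
    (α : ∀ i, A i ≃⋆ₐ[ℂ] A i) (hα : ∀ i (a : A i), α i (α i a) = a)
    (φij : ∀ i j, i ≤ j → (A i →⋆ₐ[ℂ] A j))
    (hrefl : ∀ i (a : A i), φij i i le_rfl a = a)
    (htrans : ∀ i j k (hij : i ≤ j) (hjk : j ≤ k) (a : A i),
      φij j k hjk (φij i j hij a) = φij i k (hij.trans hjk) a)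
    (hgrade : ∀ i j (hij : i ≤ j) (a : A i), φij i j hij (α i a) = α j (φij i j hij a))
    {B : Type*} [CStarAlgebra B] (β : B ≃⋆ₐ[ℂ] B) (hβ : ∀ b : B, β (β b) = b)
    (φ : ∀ i, A i →⋆ₐ[ℂ] B)
    (hcompat : ∀ i j (hij : i ≤ j) (a : A i), φ j (φij i j hij a) = φ i a)
    (hgradeB : ∀ i (a : A i), φ i (α i a) = β (φ i a))
    (hdense : Dense (⋃ i, Set.range (φ i)))
    (hnorm : ∀ i (a : A i),
      ‖φ i a‖ = sInf {r : ℝ | ∃ j, ∃ hij : i ≤ j, r = ‖φij i j hij a‖})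
    (x : B) (hxsa : star x = x) (hxsq : x ^ 2 = 1) (hxdeg : β x = -x)
    (ε : ℝ) (hε : 0 < ε) :
    ∃ j, ∃ y : A j, star y = y ∧ y ^ 2 = 1 ∧ α j y = -y ∧ ‖φ j y - x‖ < ε := by
  obtain ⟨η, hη0, hη⟩ := exists_between (lt_min (half_pos hε) one_pos)
  obtain ⟨hηε, hη1⟩ := lt_min_iff.1 hη
  have hcont := continuous_oddSelfAdjointPart β
  have hPx := oddSelfAdjointPart_eq_self β x hxsa hxdeg
  have hopen : IsOpen {b : B | ‖oddSelfAdjointPart β b ^ 2 - 1‖ < η ∧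
      ‖oddSelfAdjointPart β b - x‖ < ε / 2} := by
    refine IsOpen.and ?_ ?_ <;> exact isOpen_lt (by fun_prop) continuous_const
  obtain ⟨_, ⟨hsq, hx⟩, hmem⟩ := hdense.inter_open_nonempty _ hopen
    ⟨x, by simp [hPx, hxsq, hη0], by simp [hPx, hε]⟩
  obtain ⟨i, a, rfl⟩ := Set.mem_iUnion.1 hmem
  have hP : oddSelfAdjointPart β (φ i a) = φ i (oddSelfAdjointPart (α i) a) := by
    simp only [oddSelfAdjointPart, map_smul, map_sub, map_add, map_star, hgradeB]
  rw [hP] at hsq hx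
  set b := oddSelfAdjointPart (α i) a with hb
  have hbsa : star b = b := star_oddSelfAdjointPart (α i) a
  have hbodd : α i b = -b := map_oddSelfAdjointPart (α i) (hα i) a
  rw [← map_one (φ i), ← map_pow, ← map_sub, hnorm] at hsq
  obtain ⟨_, ⟨j, hij, rfl⟩, hlt⟩ := exists_lt_of_csInf_lt (by exact ⟨_, i, le_rfl, rfl⟩) hsq
  rw [map_sub, map_pow, map_one] at hlt
  obtain ⟨y, hysa, hysq, hyodd, hy⟩ := exists_supersymmetry_near (α j) (φij i j hij b)
    (by rw [← map_star, hbsa]) (by rw [← hgrade, hbodd, map_neg]) hη1 hlt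
  refine ⟨j, y, hysa, hysq, hyodd, ?_⟩
  have hyb : ‖φ j y - φ i b‖ ≤ η := by
    rw [← hcompat i j hij b, ← map_sub]
    exact (NonUnitalStarAlgHom.norm_apply_le (φ j) _).trans hy
  calc ‖φ j y - x‖ ≤ ‖φ j y - φ i b‖ + ‖φ i b - x‖ := norm_sub_le_norm_sub_add_norm_sub _ _ _
    _ < ε := by linarith
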